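/- (James/Chandler) Let V be an (n+1)-dimensional vector space over F_q, let A_{s,r} (for s ≤ r, s + r ≤ n+1) be the inclusion matrix of s-dimensional subspaces in r-dimensional subspaces, and let ℓ be a prime not dividing q. Then over the ℓ-adic integers ℤ_ℓ, the matrix A_{s,r} has a diagonal form with diagonal entries the Gaussian binomial coefficients binom(r-i, s-i)_q, each with multiplicity binom(n+1, i)_q - binom(n+1, i-1)_q, for 0 ≤ i ≤ s. -/

import Mathlib

attribute [local instance] Classical.propDecidable

/-- The Gaussian (`q`-)binomial coefficient `[a choose b]_q`, defined via the
`q`-Pascal recursion `[a+1, b+1]_q = [a, b]_q + q^(b+1) [a, b+1]_q`. -/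
def gaussBinom (q : ℕ) : ℕ → ℕ → ℕ
  | _, 0 => 1
  | 0, _ + 1 => 0
  | a + 1, b + 1 => gaussBinom q a b + q ^ (b + 1) * gaussBinom q a (b + 1)

theorem gb_zero (q a : ℕ) : gaussBinom q a 0 = 1 := by cases a <;> rfl

theorem gb_succ (q a b : ℕ) : gaussBinom q (a+1) (b+1) =
    gaussBinom q a b + q ^ (b + 1) * gaussBinom q a (b + 1) := rfl

theorem gb_gt (q : ℕ) : ∀ a b : ℕ, a < b → gaussBinom q a b = 0
  | 0, b + 1, _ => rfl
  | a + 1, b + 1, h => by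
    rw [gb_succ, gb_gt q a b (by omega), gb_gt q a (b+1) (by omega)]; simp

theorem gb_absorb (q : ℕ) : ∀ a b : ℕ, ((q:ℤ)^(b+1) - 1) * gaussBinom q (a+1) (b+1) =
    ((q:ℤ)^(a+1) - 1) * gaussBinom q a b
  | 0, 0 => by simp [gb_succ, gb_zero, gb_gt]
  | 0, b + 1 => by simp [gb_gt]
  | a + 1, 0 => by
    have h := gb_absorb q a 0
    rw [gb_succ]
    simp only [gb_zero] at *
    push_cast at *
    linear_combination (q:ℤ) * h
  | a + 1, b + 1 => by
    have h1 := gb_absorb q a (b+1)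
    have h2 := gb_absorb q a b
    rw [gb_succ q (a+1) (b+1)]
    have h3 : (gaussBinom q (a+1) (b+1) : ℤ) = gaussBinom q a b + q ^ (b + 1) * gaussBinom q a (b + 1) := by
      rw [gb_succ]; push_cast; rfl
    push_cast
    linear_combination (q:ℤ)^(b+1+1) * h1 - (q:ℤ) * (q^(a+1)-1) * h3 + (q:ℤ) * h2

theorem gb_rec (q m s : ℕ) (hq : 0 < q) : gaussBinom q (m+2) (s+1) =
    gaussBinom q (m+1) (s+1) + (gaussBinom q (m+1) s + (q^(m+1) - 1) * gaussBinom q m s) := by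
  have h := gb_absorb q m s
  have h1 : 1 ≤ q^(m+1) := Nat.one_le_pow _ _ hq
  rw [gb_succ q (m+1) s]
  zify [h1]
  linear_combination h

theorem gb_prod (q : ℕ) : ∀ m k : ℕ, (gaussBinom q m k : ℤ) * ∏ i ∈ Finset.range k, ((q:ℤ)^k - q^i) =
    ∏ i ∈ Finset.range k, ((q:ℤ)^m - q^i)
  | m, 0 => by simp [gb_zero]
  | 0, k + 1 => by
    rw [gb_gt q 0 _ (by omega), Finset.prod_range_succ' (fun i => (q:ℤ)^0 - q^i)]; simp
  | m + 1, k + 1 => by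
    have h := gb_prod q m k
    have h2 := gb_absorb q m k
    have e : ∀ t : ℕ, ∏ i ∈ Finset.range (k+1), ((q:ℤ)^(t+1) - q^i) =
       (q:ℤ)^k * (∏ i ∈ Finset.range k, ((q:ℤ)^t - q^i)) * (q^(t+1) - 1) := by
      intro t
      rw [Finset.prod_range_succ']
      congr 1
      · rw [← Finset.card_range k, ← Finset.prod_const, Finset.card_range, ← Finset.prod_mul_distrib]
        exact Finset.prod_congr rfl fun i _ => by ring
    rw [e, e]
    linear_combination (q:ℤ)^k * (∏ i ∈ Finset.range k, ((q:ℤ)^k - q^i)) * h2 + (q:ℤ)^k * ((q:ℤ)^(m+1)-1) * h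

section fr
open Module
variable {F : Type*} [Field F] {V : Type*} [AddCommGroup V] [Module F V] [FiniteDimensional F V]
  {V₂ : Type*} [AddCommGroup V₂] [Module F V₂]

theorem fr_ker (f : V →ₗ[F] V₂) (X : Submodule F V) (h : LinearMap.ker f ≤ X) :
    finrank F (X.map f) + finrank F (LinearMap.ker f) = finrank F X := by
  rw [← (f.domRestrict X).finrank_range_add_finrank_ker, LinearMap.range_domRestrict,
    LinearMap.ker_domRestrict]
  congr 1
  exact (Submodule.comapSubtypeEquivOfLe h).symm.finrank_eq

theorem fr_inj (f : V →ₗ[F] V₂) (X : Submodule F V) (h : X ⊓ LinearMap.ker f = ⊥) :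
    finrank F (X.map f) = finrank F X := by
  rw [← (f.domRestrict X).finrank_range_add_finrank_ker, LinearMap.range_domRestrict,
    LinearMap.ker_domRestrict]
  have : Submodule.comap X.subtype (LinearMap.ker f) = ⊥ := by
    rw [eq_bot_iff]
    rintro ⟨x, hx⟩ hk
    have : x ∈ X ⊓ LinearMap.ker f := ⟨hx, hk⟩
    rw [h] at this
    simpa using this
  simp [this]

theorem fr_add (f : V →ₗ[F] V₂) (X K : Submodule F V) (h : K ≤ X) (h2 : K ≤ LinearMap.ker f) :
    finrank F (X.map f) + finrank F K ≤ finrank F X := by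
  rw [← (f.domRestrict X).finrank_range_add_finrank_ker, LinearMap.range_domRestrict,
    LinearMap.ker_domRestrict]
  gcongr
  rw [← (Submodule.comapSubtypeEquivOfLe h).finrank_eq]
  exact Submodule.finrank_mono (Submodule.comap_mono h2)
end fr

section count
open Module
variable {F : Type*} [Field F] [Fintype F] {V : Type*} [AddCommGroup V] [Module F V] [Finite V]

noncomputable def liEquiv (k : ℕ) : {t : Fin k → V // LinearIndependent F t} ≃
    Σ X : {X : Submodule F V // finrank F X = k}, {t : Fin k → X.1 // LinearIndependent F t} where
  toFun t := ⟨⟨Submodule.span F (Set.range t.1), by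
      simpa using finrank_span_eq_card t.2⟩,
      fun i => ⟨t.1 i, Submodule.subset_span ⟨i, rfl⟩⟩, by
        exact LinearIndependent.of_comp (Submodule.subtype _) t.2⟩
  invFun x := ⟨fun i => x.2.1 i, x.2.2.map' (Submodule.subtype _) (by simp)⟩
  left_inv t := rfl
  right_inv := by
    rintro ⟨⟨X, hX⟩, t, ht⟩
    have h : Submodule.span F (Set.range fun i => (t i : V)) = X := by
      have h1 := ht.map' X.subtype (by simp)
      apply Submodule.eq_of_le_of_finrank_eq
      · rw [Submodule.span_le]; rintro _ ⟨i, rfl⟩; exact (t i).2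
      · have := finrank_span_eq_card h1
        simp at this
        rw [hX]; exact this
    have aux : ∀ (Y : Submodule F V) (hY : finrank F Y = k) (t' : Fin k → Y)
        (ht' : LinearIndependent F t'), Y = X → (∀ i, (t' i : V) = t i) →
        (⟨⟨Y, hY⟩, ⟨t', ht'⟩⟩ : Σ X : {X : Submodule F V // finrank F X = k},
          {t : Fin k → X.1 // LinearIndependent F t}) = ⟨⟨X, hX⟩, ⟨t, ht⟩⟩ := by
      rintro Y hY t' ht' rfl h
      have : t' = t := funext fun i => Subtype.ext (h i)
      subst this
      rfl
    exact aux _ _ _ _ h fun i => rfl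

theorem card_gr (k : ℕ) : Nat.card {X : Submodule F V // finrank F X = k} =
    gaussBinom (Fintype.card F) (finrank F V) k := by
  by_cases hk : k ≤ finrank F V
  · have : Fintype V := Fintype.ofFinite V
    have hq : 1 < Fintype.card F := Fintype.one_lt_card
    have h1 := Nat.card_congr (liEquiv (F := F) (V := V) k)
    have := Fintype.ofFinite {X : Submodule F V // finrank F X = k}
    rw [Nat.card_sigma, card_linearIndependent hk] at h1
    have h2 : ∀ X : {X : Submodule F V // finrank F X = k},
        Nat.card {t : Fin k → X.1 // LinearIndependent F t} = ∏ i : Fin k, (Fintype.card F ^ k - Fintype.card F ^ i.1) := by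
      intro X
      rw [card_linearIndependent X.2.ge, X.2]
    simp only [h2, Finset.sum_const, Finset.card_univ, smul_eq_mul] at h1
    rw [Nat.card_eq_fintype_card]
    have h3 := gb_prod (Fintype.card F) (finrank F V) k
    have conv : ∀ t, k ≤ t → ((∏ i : Fin k, (Fintype.card F ^ t - Fintype.card F ^ i.1) : ℕ) : ℤ) = ∏ i ∈ Finset.range k, ((Fintype.card F:ℤ)^t - (Fintype.card F:ℤ)^i) := by
      intro t ht
      rw [Finset.prod_range]
      push_cast
      refine Finset.prod_congr rfl fun i _ => ?_
      rw [Nat.cast_sub (Nat.pow_le_pow_right hq.le (by omega))]; push_cast; rfl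
    rw [← conv _ le_rfl, ← conv _ hk] at h3
    norm_cast at h3
    rw [h1] at h3
    refine (Nat.eq_of_mul_eq_mul_right ?_ h3).symm
    apply Finset.prod_pos
    intro i _
    exact Nat.sub_pos_of_lt (Nat.pow_lt_pow_right hq i.2)
  · rw [gb_gt _ _ _ (by omega)]
    have : IsEmpty {X : Submodule F V // finrank F X = k} := ⟨fun X => hk (X.2 ▸ Submodule.finrank_le X.1)⟩
    simp

theorem card_interval {U W : Submodule F V} (h : U ≤ W) (s : ℕ) (hs : finrank F U ≤ s) :
    Nat.card {S : Submodule F V // finrank F S = s ∧ U ≤ S ∧ S ≤ W} =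
    gaussBinom (Fintype.card F) (finrank F W - finrank F U) (s - finrank F U) := by
  have hU : finrank F (Submodule.comap W.subtype U) = finrank F U :=
    (Submodule.comapSubtypeEquivOfLe h).finrank_eq
  have e : finrank F (W ⧸ Submodule.comap W.subtype U) = finrank F W - finrank F U := by
    rw [Submodule.finrank_quotient, hU]
  have : Finite (W ⧸ Submodule.comap W.subtype U) := Finite.of_surjective _ (Submodule.mkQ_surjective _)
  have : FiniteDimensional F V := inferInstance
  rw [← e, ← card_gr]
  symm
  set U' := Submodule.comap W.subtype U with hU'
  have key : ∀ Y : Submodule F (W ⧸ U'), finrank F (Submodule.map W.subtype (Submodule.comap U'.mkQ Y)) = finrank F Y + finrank F U := by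
    intro Y
    rw [Submodule.finrank_map_subtype_eq, ← fr_ker U'.mkQ _ (by
      rw [LinearMap.ker]; exact Submodule.comap_mono bot_le),
      Submodule.map_comap_eq_of_surjective (Submodule.mkQ_surjective _), Submodule.ker_mkQ, hU]
  refine Nat.card_congr (Equiv.ofBijective (fun Y => ⟨Submodule.map W.subtype (Submodule.comap U'.mkQ Y.1), ?_, ?_, ?_⟩) ⟨?_, ?_⟩)
  · rw [key, Y.2]; omega
  · intro x hx
    refine ⟨⟨x, h hx⟩, ?_, rfl⟩
    have : (⟨x, h hx⟩ : W) ∈ U' := hx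
    have h2 : U'.mkQ ⟨x, h hx⟩ = 0 := by simpa using this
    rw [SetLike.mem_coe, Submodule.mem_comap, h2]; exact zero_mem _
  · exact Submodule.map_subtype_le _ _
  · intro Y Y' hh
    apply Subtype.ext
    apply Submodule.comap_injective_of_surjective (Submodule.mkQ_surjective U')
    exact Submodule.map_injective_of_injective W.subtype_injective (congrArg Subtype.val hh)
  · rintro ⟨S, hS, hUS, hSW⟩
    have e2 : Submodule.map W.subtype (Submodule.comap U'.mkQ (Submodule.map U'.mkQ (Submodule.comap W.subtype S))) = S := by
      rw [Submodule.comap_map_mkQ, sup_eq_right.2 (Submodule.comap_mono hUS), Submodule.map_comap_subtype, inf_eq_right.2 hSW]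
    refine ⟨⟨Submodule.map U'.mkQ (Submodule.comap W.subtype S), ?_⟩, Subtype.ext e2⟩
    have := key (Submodule.map U'.mkQ (Submodule.comap W.subtype S))
    rw [e2] at this
    omega
end count

set_option linter.unusedSectionVars false

section dual
open Module
variable {k : Type*} [Field k] {F : Type*} [Field F] [Fintype F]
  {V : Type*} [AddCommGroup V] [Module F V] [Fintype V] [Fintype (Dual F V)]

theorem dual_shift (C : Dual F V → Prop) (w : V) (τ : Dual F V) (hC : ∀ φ, C (φ + τ) ↔ C φ)
    (hw : τ w = 1) :
    ∑ φ : Dual F V, (if C φ then ((if φ w = 1 then (1:k) else 0) - (if φ w = 0 then 1 else 0)) else 0) = 0 := by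
  have h1 : ∑ φ : Dual F V, (if C φ then (if φ w = 1 then (1:k) else 0) else 0) =
      ∑ φ : Dual F V, (if C φ then (if φ w = 0 then (1:k) else 0) else 0) := by
    rw [← Equiv.sum_comp (Equiv.addRight τ)]
    simp [hC, hw]
  have h2 : ∀ φ : Dual F V, (if C φ then ((if φ w = 1 then (1:k) else 0) - (if φ w = 0 then 1 else 0)) else 0)
     = (if C φ then (if φ w = 1 then (1:k) else 0) else 0) - (if C φ then (if φ w = 0 then (1:k) else 0) else 0) := by
    intro φ; split_ifs <;> simp
  simp_rw [h2]
  rw [Finset.sum_sub_distrib, h1, sub_self]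

theorem exists_dual_one {w : V} (hw : w ≠ 0) : ∃ τ : Dual F V, τ w = 1 := by
  obtain ⟨f, hf⟩ : ∃ f : Dual F V, f w ≠ 0 := by
    by_contra! h
    exact hw ((Module.forall_dual_apply_eq_zero_iff F w).1 h)
  exact ⟨(f w)⁻¹ • f, by simp [hf]⟩

theorem exists_dual_sep {v w : V} (hw : w ∉ Submodule.span F {v}) : ∃ τ : Dual F V, τ v = 0 ∧ τ w = 1 := by
  obtain ⟨f, hf, h2⟩ := Submodule.exists_le_ker_of_notMem hw
  refine ⟨(f w)⁻¹ • f, ?_, by simp [hf]⟩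
  have : f v = 0 := h2 (Submodule.mem_span_singleton_self v)
  simp [this]

theorem card_dual_ne (hq : (Fintype.card F : k) ≠ 0) : (Fintype.card (Dual F V) : k) ≠ 0 := by
  rw [Module.card_eq_pow_finrank (K := F)]
  push_cast
  exact pow_ne_zero _ hq

theorem fiber_ne (hq : (Fintype.card F : k) ≠ 0) {v : V} (hv : v ≠ 0) :
    ∑ φ : Dual F V, (if φ v = 1 then (1:k) else 0) ≠ 0 := by
  obtain ⟨τ, hτ⟩ := exists_dual_one (F := F) hv
  have h1 : ∀ a : F, ∑ φ : Dual F V, (if φ v = a then (1:k) else 0) = ∑ φ : Dual F V, (if φ v = 1 then (1:k) else 0) := by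
    intro a
    rw [← Equiv.sum_comp (Equiv.addRight ((a-1) • τ))]
    refine Finset.sum_congr rfl fun φ _ => ?_
    have : (Equiv.addRight ((a-1) • τ) φ) v = a ↔ φ v = 1 := by
      simp [hτ]
      constructor <;> intro h <;> linear_combination h
    simp only [this]
  have h2 : (Fintype.card (Dual F V) : k) = ∑ a : F, ∑ φ : Dual F V, (if φ v = a then (1:k) else 0) := by
    rw [Finset.sum_comm]; simp
  intro h0
  apply card_dual_ne (k := k) (F := F) (V := V) hq
  rw [h2]
  simp [h1, h0]

theorem dual_indep (hq : (Fintype.card F : k) ≠ 0) (c : V → k)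
    (h : ∀ φ : Dual F V, ∑ w, c w * ((if φ w = 1 then (1:k) else 0) - (if φ w = 0 then 1 else 0)) = 0) :
    ∀ w, c w = 0 := by
  have h0 : c 0 = 0 := by
    have e : ∑ φ : Dual F V, ∑ w, c w * ((if φ w = 1 then (1:k) else 0) - (if φ w = 0 then 1 else 0)) = 0 :=
      Finset.sum_eq_zero fun φ _ => h φ
    rw [Finset.sum_comm, Finset.sum_eq_single 0] at e
    · simp at e
      rcases e with e | e
      · exact absurd e (card_dual_ne hq)
      · exact e
    · intro w _ hw
      obtain ⟨τ, hτ⟩ := exists_dual_one (F := F) hw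
      rw [← Finset.mul_sum]
      have := dual_shift (k := k) (fun _ => True) w τ (by simp) hτ
      simp only [if_true] at this
      rw [this, mul_zero]
    · simp
  intro v
  by_cases hv : v = 0
  · rw [hv, h0]
  have e : ∑ φ : Dual F V, ∑ w, c w * (if φ v = 1 then ((if φ w = 1 then (1:k) else 0) - (if φ w = 0 then 1 else 0)) else 0) = 0 :=
    Finset.sum_eq_zero fun φ _ => by
      split_ifs with hh
      · exact h φ
      · simp
  rw [Finset.sum_comm, Finset.sum_eq_single v] at e
  · rw [← Finset.mul_sum] at e
    have e2 : ∑ φ : Dual F V, (if φ v = 1 then ((if φ v = 1 then (1:k) else 0) - (if φ v = 0 then 1 else 0)) else 0) = ∑ φ : Dual F V, (if φ v = 1 then (1:k) else 0) := by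
      refine Finset.sum_congr rfl fun φ _ => ?_
      split_ifs with h1 h2
      · rw [h1] at h2; simp at h2
      · simp
      · rfl
    rw [e2] at e
    exact (mul_eq_zero.1 e).resolve_right (fiber_ne hq hv)
  · intro w _ hw
    rw [← Finset.mul_sum]
    by_cases hs : w ∈ Submodule.span F {v}
    · obtain ⟨a, rfl⟩ := Submodule.mem_span_singleton.1 hs
      by_cases ha : a = 0
      · simp [ha, h0]
      · rw [Finset.sum_eq_zero, mul_zero]
        intro φ _
        split_ifs with h1 h2 h3 h3
        · simp [h1] at h2; simp [h2] at hw
        · simp [h1] at h2; simp [h2] at hw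
        · simp [h1] at h3; exact absurd h3 ha
        · simp
        · rfl
    · obtain ⟨τ, hτ, hτ2⟩ := exists_dual_sep hs
      rw [dual_shift (k := k) (fun φ => φ v = 1) w τ (by simp [hτ]) hτ2, mul_zero]
  · simp
end dual

section claim
open Module
variable (k : Type*) [Field k] {F : Type*} [Field F] [Fintype F]

noncomputable def inc {V : Type*} [AddCommGroup V] [Module F V] (r : ℕ) (X W : Submodule F V) : k :=
  if X ≤ W ∧ finrank F W = r then 1 else 0

variable (F) in
def Rsp (V : Type*) [AddCommGroup V] [Module F V] (s r : ℕ) : Submodule k (Submodule F V → k) :=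
  Submodule.span k (inc k r '' {X | finrank F X ≤ s})

variable {V : Type*} [AddCommGroup V] [Module F V] [Finite V]

omit [Finite V] in
theorem inc_mem {s r : ℕ} {X : Submodule F V} (h : finrank F X ≤ s) : inc k r X ∈ Rsp k F V s r :=
  Submodule.subset_span ⟨X, h, rfl⟩

theorem uniq_lift {W X : Submodule F (F × V)} {X' : Submodule F V} (hW : ((1:F), (0:V)) ∉ W)
    (hX : X ≤ W) (h : X.map (LinearMap.snd F F V) = X') : X = W ⊓ X'.comap (LinearMap.snd F F V) := by
  apply le_antisymm
  · refine le_inf hX ?_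
    rw [← h]; exact Submodule.le_comap_map _ _
  · rintro ⟨a, y⟩ ⟨h1, h2⟩
    have h3 : y ∈ X' := h2
    rw [← h] at h3
    obtain ⟨⟨b, y'⟩, hb, hy⟩ := h3
    have hy : y' = y := hy
    subst hy
    by_cases hab : a = b
    · rw [hab]; exact hb
    · exfalso
      apply hW
      have := W.smul_mem (a - b)⁻¹ (W.sub_mem h1 (hX hb))
      have hab' : a - b ≠ 0 := sub_ne_zero.2 hab
      simpa [hab'] using this

theorem exists_lift {W : Submodule F (F × V)} {X' : Submodule F V}
    (h : X' ≤ W.map (LinearMap.snd F F V)) :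
    (W ⊓ X'.comap (LinearMap.snd F F V)).map (LinearMap.snd F F V) = X' := by
  apply le_antisymm
  · rintro _ ⟨x, hx, rfl⟩
    exact hx.2
  · intro y hy
    obtain ⟨x, hx, rfl⟩ := h hy
    exact ⟨x, ⟨hx, hy⟩, rfl⟩

theorem lift_sum [Fintype (Submodule F (F × V))] (C : Submodule F (F × V) → Prop) (W : Submodule F (F × V)) (X' : Submodule F V)
    (hW : ((1:F), (0:V)) ∉ W) (r : ℕ) :
    ∑ X : Submodule F (F × V), (if ((1:F), (0:V)) ∉ X ∧ X.map (LinearMap.snd F F V) = X' ∧ C X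
      then inc k r X W else 0) =
    if X' ≤ W.map (LinearMap.snd F F V) ∧ C (W ⊓ X'.comap (LinearMap.snd F F V)) ∧ finrank F W = r then 1 else 0 := by
  by_cases hr : finrank F W = r
  swap
  · simp [inc, hr]
  by_cases h : X' ≤ W.map (LinearMap.snd F F V)
  · rw [Finset.sum_eq_single (W ⊓ X'.comap (LinearMap.snd F F V))]
    · have h1 : ((1:F), (0:V)) ∉ W ⊓ X'.comap (LinearMap.snd F F V) := fun hh => hW hh.1
      simp only [exists_lift h, h, inc, hr, h1, inf_le_left]
      simp
    · intro X _ hX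
      split_ifs with hc
      · rw [inc, if_neg]
        rintro ⟨h2, -⟩
        exact hX (uniq_lift hW h2 hc.2.1)
      · rfl
    · simp
  · rw [if_neg (fun hh => h hh.1)]
    apply Finset.sum_eq_zero
    intro X _
    split_ifs with hc
    · rw [inc, if_neg]
      rintro ⟨h2, -⟩
      apply h
      rw [← hc.2.1]
      exact Submodule.map_mono h2
    · rfl

theorem fr_snd {W : Submodule F (F × V)} (hW : ((1:F), (0:V)) ∉ W) :
    finrank F (W.map (LinearMap.snd F F V)) = finrank F W := by
  apply fr_inj
  rw [eq_bot_iff]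
  rintro ⟨a, y⟩ ⟨h1, h2⟩
  have h2 : y = 0 := h2
  subst h2
  by_cases ha : a = 0
  · simp [ha]
  · exfalso
    apply hW
    simpa [ha] using W.smul_mem a⁻¹ h1

noncomputable def Phi0 : (Submodule F V → k) →ₗ[k] (Submodule F (F × V) → k) where
  toFun u W := if ((1:F), (0:V)) ∈ W then 0 else u (W.map (LinearMap.snd F F V))
  map_add' u v := by ext W; simp only [Pi.add_apply]; split_ifs <;> simp
  map_smul' c v := by ext W; simp only [Pi.smul_apply]; split_ifs <;> simp

noncomputable def Phi (v : V) : (Submodule F (V ⧸ Submodule.span F {v}) → k) →ₗ[k] (Submodule F (F × V) → k) where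
  toFun u W := if ((1:F), (0:V)) ∈ W then 0 else
    ((if ((1:F), v) ∈ W then 1 else 0) - (if ((0:F), v) ∈ W then 1 else 0)) *
    u ((W.map (LinearMap.snd F F V)).map (Submodule.span F {v}).mkQ)
  map_add' u v := by ext W; simp only [Pi.add_apply]; split_ifs <;> simp <;> ring
  map_smul' c v := by ext W; simp only [Pi.smul_apply]; split_ifs <;> simp

theorem Phi0_mem {s r : ℕ} {X' : Submodule F V} (h : finrank F X' ≤ s) :
    Phi0 k (inc k r X') ∈ Rsp k F (F × V) (s+1) r := by
  have := Fintype.ofFinite (Submodule F (F × V))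
  have e : Phi0 k (inc k r X') = ∑ X : Submodule F (F × V),
      (if ((1:F), (0:V)) ∉ X ∧ X.map (LinearMap.snd F F V) = X' ∧ True
      then inc k r X - inc k r (X ⊔ Submodule.span F {((1:F), (0:V))}) else 0) := by
    ext W
    simp only [Phi0, LinearMap.coe_mk, AddHom.coe_mk, Finset.sum_apply]
    split_ifs with hW
    · symm
      apply Finset.sum_eq_zero
      intro X _
      split_ifs
      · simp [inc, hW]
      · rfl
    · have := lift_sum k (fun _ => True) W X' hW r
      rw [inc, fr_snd hW]
      simp only [true_and] at this
      rw [← this]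
      refine Finset.sum_congr rfl fun X _ => ?_
      split_ifs
      · simp [inc, hW]
      · rfl
  rw [e]
  refine Submodule.sum_mem _ fun X _ => ?_
  split_ifs with hc
  · have h1 := fr_snd hc.1
    rw [hc.2.1] at h1
    refine Submodule.sub_mem _ (inc_mem k (by omega)) (inc_mem k ?_)
    have h2 := Submodule.finrank_add_le_finrank_add_finrank X (Submodule.span F {((1:F), (0:V))})
    have h3 := finrank_span_singleton (K := F) (v := ((1:F), (0:V))) (by simp)
    omega
  · exact zero_mem _

theorem shear_sum [Fintype (Submodule F (F × V))] {v : V} (hv : v ≠ 0) (W : Submodule F (F × V))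
    (hW : ((1:F), (0:V)) ∈ W) (X' : Submodule F V) (r : ℕ) :
    ∑ X : Submodule F (F × V), (if ((1:F), (0:V)) ∉ X ∧ X.map (LinearMap.snd F F V) = X' ∧ ((1:F), v) ∈ X
      then inc k r X W else 0) =
    ∑ X : Submodule F (F × V), (if ((1:F), (0:V)) ∉ X ∧ X.map (LinearMap.snd F F V) = X' ∧ ((0:F), v) ∈ X
      then inc k r X W else 0) := by
  have := Fintype.ofFinite V
  have : Finite (Dual F V) := DFunLike.finite _
  have := Fintype.ofFinite (Dual F V)
  obtain ⟨τ, hτ⟩ := exists_dual_one (F := F) hv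
  let g : (F × V) ≃ₗ[F] (F × V) := LinearEquiv.ofLinearMap
    ((LinearMap.fst F F V + τ ∘ₗ LinearMap.snd F F V).prod (LinearMap.snd F F V))
    ((LinearMap.fst F F V - τ ∘ₗ LinearMap.snd F F V).prod (LinearMap.snd F F V))
    (by ext <;> simp) (by ext <;> simp)
  have hg : ∀ a y, g (a, y) = (a + τ y, y) := fun a y => rfl
  have hgs : ∀ a y, g.symm (a, y) = (a - τ y, y) := fun a y => rfl
  rw [← Equiv.sum_comp (Submodule.orderIsoMapComap g).toEquiv]
  refine Finset.sum_congr rfl fun X _ => ?_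
  have e0 : (Submodule.orderIsoMapComap g).toEquiv X = X.map g.toLinearMap := rfl
  rw [e0]
  have hm : ∀ a y, (a, y) ∈ X.map g.toLinearMap ↔ (a - τ y, y) ∈ X := by
    intro a y
    rw [← hgs]
    exact Submodule.mem_map_equiv _
  have e1 : (X.map g.toLinearMap).map (LinearMap.snd F F V) = X.map (LinearMap.snd F F V) := by
    rw [← Submodule.map_comp]; rfl
  have key : ∀ a b : F, ∀ y, (a, y) ∈ W → (b, y) ∈ W := by
    intro a b y h
    have := W.add_mem h (W.smul_mem (b - a) hW)
    simpa using this
  have e2 : X.map g.toLinearMap ≤ W ↔ X ≤ W := by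
    constructor
    · rintro h ⟨a, y⟩ hx
      exact key _ _ _ (h ⟨_, hx, rfl⟩)
    · rintro h _ ⟨⟨a, y⟩, hx, rfl⟩
      exact key a _ _ (h hx)
  simp only [hm, e1, inc, e2]
  simp [hτ]

theorem Phi_mem {s r : ℕ} {v : V} (hv : v ≠ 0) {Z : Submodule F (V ⧸ Submodule.span F {v})}
    (h : finrank F Z ≤ s) :
    Phi k v (inc k r Z) ∈ Rsp k F (F × V) (s+1) (r+1) := by
  have := Fintype.ofFinite (Submodule F (F × V))
  set X' := Z.comap (Submodule.span F {v}).mkQ with hX'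
  have hvX : v ∈ X' := by
    have : (Submodule.span F {v}).mkQ v = 0 := by simp [Submodule.mem_span_singleton_self]
    rw [hX', Submodule.mem_comap, this]; exact zero_mem _
  have hfq : ∀ Y : Submodule F V, v ∈ Y → finrank F (Y.map (Submodule.span F {v}).mkQ) + 1 = finrank F Y := by
    intro Y hY
    rw [← fr_ker (Submodule.span F {v}).mkQ Y (by simpa using hY), Submodule.ker_mkQ,
      finrank_span_singleton hv]
  have hdim : finrank F X' = finrank F Z + 1 := by
    rw [← hfq _ hvX, hX', Submodule.map_comap_eq_of_surjective (Submodule.mkQ_surjective _)]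
  have e : Phi k v (inc k r Z) = (∑ X : Submodule F (F × V),
      (if ((1:F), (0:V)) ∉ X ∧ X.map (LinearMap.snd F F V) = X' ∧ ((1:F), v) ∈ X
      then inc k (r+1) X else 0)) - (∑ X : Submodule F (F × V),
      (if ((1:F), (0:V)) ∉ X ∧ X.map (LinearMap.snd F F V) = X' ∧ ((0:F), v) ∈ X
      then inc k (r+1) X else 0)) := by
    ext W
    simp only [Phi, LinearMap.coe_mk, AddHom.coe_mk, Finset.sum_apply, Pi.sub_apply, ite_apply, Pi.zero_apply]
    by_cases hW : ((1:F), (0:V)) ∈ W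
    · rw [if_pos hW, shear_sum k hv W hW, sub_self]
    · rw [if_neg hW, lift_sum k (fun X => ((1:F), v) ∈ X) W X' hW, lift_sum k (fun X => ((0:F), v) ∈ X) W X' hW, sub_mul]
      have main : ∀ a : F, (if (a, v) ∈ W then (1:k) else 0) * inc k r Z ((W.map (LinearMap.snd F F V)).map (Submodule.span F {v}).mkQ)
         = if X' ≤ Submodule.map (LinearMap.snd F F V) W ∧ (a, v) ∈ W ⊓ Submodule.comap (LinearMap.snd F F V) X' ∧ finrank F W = r + 1 then 1 else 0 := by
        intro a
        by_cases ha : (a, v) ∈ W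
        · have hvW : v ∈ W.map (LinearMap.snd F F V) := ⟨_, ha, rfl⟩
          have h1 := hfq _ hvW
          rw [fr_snd hW] at h1
          have h2 : X' ≤ Submodule.map (LinearMap.snd F F V) W ↔ Z ≤ (W.map (LinearMap.snd F F V)).map (Submodule.span F {v}).mkQ := by
            constructor
            · intro h
              have := Submodule.map_mono (f := (Submodule.span F {v}).mkQ) h
              rwa [hX', Submodule.map_comap_eq_of_surjective (Submodule.mkQ_surjective _)] at this
            · intro h
              have := Submodule.comap_mono (f := (Submodule.span F {v}).mkQ) h
              rwa [Submodule.comap_map_mkQ, sup_eq_right.2 (by simpa using hvW)] at this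
          have h3 : (a, v) ∈ W ⊓ Submodule.comap (LinearMap.snd F F V) X' := ⟨ha, hvX⟩
          have h4 : finrank F W = r + 1 ↔ finrank F ((W.map (LinearMap.snd F F V)).map (Submodule.span F {v}).mkQ) = r := by omega
          simp only [inc, h2, h3, h4, ha]
          simp
        · rw [if_neg ha, zero_mul, if_neg]
          rintro ⟨-, hh, -⟩
          exact ha hh.1
      rw [main, main]
  rw [e]
  refine Submodule.sub_mem _ (Submodule.sum_mem _ fun X _ => ?_) (Submodule.sum_mem _ fun X _ => ?_)
  all_goals
    split_ifs with hc
    · have h1 := fr_snd hc.1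
      rw [hc.2.1] at h1
      exact inc_mem k (by omega)
    · exact zero_mem _


theorem exists_sub_finrank (r : ℕ) (h : r ≤ finrank F V) : ∃ W : Submodule F V, finrank F W = r := by
  let b := finBasis F V
  have hl : LinearIndependent F (b ∘ Fin.castLE h) :=
    b.linearIndependent.comp _ (Fin.castLE_injective h)
  exact ⟨Submodule.span F (Set.range (b ∘ Fin.castLE h)), by simpa using finrank_span_eq_card hl⟩

theorem claim_zero (r : ℕ) (h : r ≤ finrank F V) : 1 ≤ finrank k (Rsp k F V 0 r) := by
  obtain ⟨W, hW⟩ := exists_sub_finrank (F := F) (V := V) r h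
  rw [Nat.one_le_iff_ne_zero, Ne, Submodule.finrank_eq_zero]
  intro h0
  have := inc_mem k (s := 0) (r := r) (X := (⊥ : Submodule F V)) (by simp)
  rw [h0, Submodule.mem_bot] at this
  have := congrFun this W
  simp [inc, hW] at this

theorem claim_diag (s : ℕ) : finrank k (Rsp k F V s s) = Nat.card {X : Submodule F V // finrank F X = s} := by
  have := Fintype.ofFinite {X : Submodule F V // finrank F X = s}
  have hp : ∀ X : {X : Submodule F V // finrank F X = s}, inc k s X.1 = Pi.single X.1 1 := by
    rintro ⟨X, hX⟩
    ext W
    rw [inc, Pi.single_apply]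
    congr 1
    simp only [eq_iff_iff]
    constructor
    · rintro ⟨h1, h2⟩
      exact (Submodule.eq_of_le_of_finrank_eq h1 (hX.trans h2.symm)).symm
    · rintro rfl; exact ⟨le_rfl, hX⟩
  have hl : LinearIndependent k (fun X : {X : Submodule F V // finrank F X = s} => inc k s X.1) := by
    simp_rw [hp]
    exact (Pi.linearIndependent_single_one (Submodule F V) k).comp _ Subtype.val_injective
  rw [Nat.card_eq_fintype_card, ← finrank_span_eq_card hl]
  suffices hE : Rsp k F V s s = Submodule.span k (Set.range fun X : {X : Submodule F V // finrank F X = s} => inc k s X.1) by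
    rw [hE]
  apply le_antisymm
  · rw [Rsp, Submodule.span_le]
    rintro _ ⟨X, -, rfl⟩
    have : inc k s X = ∑ W : {X : Submodule F V // finrank F X = s}, (inc k s X W.1) • inc k s W.1 := by
      ext W
      simp only [hp, Finset.sum_apply, Pi.smul_apply, Pi.single_apply, smul_eq_mul, mul_ite, mul_one, mul_zero]
      by_cases hW : finrank F W = s
      · rw [Finset.sum_eq_single ⟨W, hW⟩]
        · simp
        · intro b _ hb
          rw [if_neg]
          rintro rfl
          exact hb rfl
        · simp
      · rw [Finset.sum_eq_zero]
        · simp [inc, hW]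
        · intro b _
          rw [if_neg]
          rintro rfl
          exact hW b.2
    rw [this]
    exact Submodule.sum_mem _ fun W _ => Submodule.smul_mem _ _ (Submodule.subset_span ⟨W, rfl⟩)
  · rw [Submodule.span_le]
    rintro _ ⟨X, rfl⟩
    exact inc_mem k X.2.le

noncomputable def rho : (Submodule F (F × V) → k) →ₗ[k] (Submodule F V → k) :=
  LinearMap.funLeft k k (fun Y => Submodule.prod ⊤ Y)

theorem rho_map (s r : ℕ) : Rsp k F V s r ≤ (Rsp k F (F × V) s (r+1)).map (rho k) := by
  rw [Rsp, Submodule.span_le]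
  rintro _ ⟨Z, hZ, rfl⟩
  refine ⟨inc k (r+1) (Z.map (LinearMap.inr F F V)), inc_mem k ?_, ?_⟩
  · rw [fr_inj]
    · exact hZ
    · simp [LinearMap.ker_eq_bot.2 (show Function.Injective (LinearMap.inr F F V) from LinearMap.inr_injective)]
  · ext Y
    have h1 : Z.map (LinearMap.inr F F V) ≤ Submodule.prod ⊤ Y ↔ Z ≤ Y := by
      rw [Submodule.map_le_iff_le_comap]
      constructor
      · intro h y hy
        have := h hy
        simpa using this
      · intro h y hy
        simpa using h hy
    have h2 : finrank F (Submodule.prod (⊤ : Submodule F F) Y) = finrank F Y + 1 := by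
      have a1 : finrank F (LinearMap.ker (LinearMap.snd F F V)) = 1 := by
        rw [LinearMap.ker_snd, LinearMap.finrank_range_of_inj LinearMap.inl_injective, finrank_self]
      rw [← fr_ker (LinearMap.snd F F V), a1]
      · have a2 : (Submodule.prod (⊤ : Submodule F F) Y).map (LinearMap.snd F F V) = Y := by
          ext y
          constructor
          · rintro ⟨x, hx, rfl⟩
            exact hx.2
          · intro hy
            exact ⟨(0, y), ⟨trivial, hy⟩, rfl⟩
        rw [a2]
      · rintro ⟨a, y⟩ hy
        have hy : y = 0 := hy
        subst hy
        exact ⟨trivial, zero_mem _⟩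
    change inc k (r+1) (Z.map (LinearMap.inr F F V)) (Submodule.prod ⊤ Y) = inc k r Z Y
    simp only [inc, h1, h2, Nat.add_right_cancel_iff]

variable (F V) in
noncomputable def Psi [Fintype V] : ((Submodule F V → k) × ((v : {v : V // v ≠ 0}) → (Submodule F (V ⧸ Submodule.span F {v.1}) → k)))
    →ₗ[k] (Submodule F (F × V) → k) :=
  (Phi0 k).coprod (∑ v : {v : V // v ≠ 0}, (Phi k v.1) ∘ₗ LinearMap.proj v)

theorem Psi_apply [Fintype V] (u : (Submodule F V → k) × ((v : {v : V // v ≠ 0}) → (Submodule F (V ⧸ Submodule.span F {v.1}) → k))) :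
    Psi k F V u = Phi0 k u.1 + ∑ v : {v : V // v ≠ 0}, Phi k v.1 (u.2 v) := by
  simp [Psi]

theorem Psi_inj [Fintype V] (hq : (Fintype.card F : k) ≠ 0) : Function.Injective (Psi k F V) := by
  rw [← LinearMap.ker_eq_bot, LinearMap.ker_eq_bot']
  rintro ⟨u0, u⟩ h
  rw [Psi_apply] at h
  have : Finite (Dual F V) := DFunLike.finite _
  have := Fintype.ofFinite (Dual F V)
  have key : ∀ Y : Submodule F V, ∀ w, (if hw : w = 0 then -u0 Y else if w ∈ Y then u ⟨w, hw⟩ (Y.map (Submodule.span F {w}).mkQ) else 0) = 0 := by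
    intro Y
    apply dual_indep (F := F) hq
    intro φ
    have h1 := congrFun h (Y.map (φ.prod LinearMap.id))
    have m1 : ∀ a v, (a, v) ∈ Y.map (φ.prod LinearMap.id) ↔ v ∈ Y ∧ φ v = a := by
      intro a v
      constructor
      · rintro ⟨y, hy, hh⟩
        simp only [LinearMap.prod_apply, Function.prod_apply, LinearMap.id_apply, Prod.mk.injEq] at hh
        obtain ⟨h1, rfl⟩ := hh
        exact ⟨hy, h1⟩
      · rintro ⟨hv, rfl⟩
        exact ⟨v, hv, rfl⟩
    have m2 : (Y.map (φ.prod LinearMap.id)).map (LinearMap.snd F F V) = Y := by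
      rw [← Submodule.map_comp]; simp
    simp only [Phi0, Phi, LinearMap.coe_mk, AddHom.coe_mk, Pi.add_apply, Finset.sum_apply, m1, m2, Pi.zero_apply] at h1
    rw [Fintype.sum_eq_add_sum_subtype_ne _ 0]
    simp only [map_zero, zero_ne_one, and_false, if_false] at h1
    simp only [dite_true, map_zero, zero_ne_one, if_false, if_true]
    refine Eq.trans ?_ h1
    congr 1
    · ring
    · refine Finset.sum_congr rfl fun v _ => ?_
      rw [dif_neg v.2]
      by_cases hvY : v.1 ∈ Y
      · simp only [hvY, true_and, if_true]; exact mul_comm _ _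
      · simp [hvY]
  ext : 1
  · funext Y
    simpa using key Y 0
  · funext v Z
    have := key (Z.comap (Submodule.span F {v.1}).mkQ) v.1
    rw [dif_neg v.2, if_pos, Submodule.map_comap_eq_of_surjective (Submodule.mkQ_surjective _)] at this
    · exact this
    · have : (Submodule.span F {v.1}).mkQ v.1 = 0 := by simp [Submodule.mem_span_singleton_self]
      rw [Submodule.mem_comap, this]; exact zero_mem _

theorem claim_step (hq : (Fintype.card F : k) ≠ 0) (s r c : ℕ)
   (hc : ∀ v : V, v ≠ 0 → c ≤ finrank k (Rsp k F (V ⧸ Submodule.span F {v}) s r)) :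
    finrank k (Rsp k F V (s+1) r) + (finrank k (Rsp k F V s (r+1)) +
      (Fintype.card F ^ finrank F V - 1) * c) ≤ finrank k (Rsp k F (F × V) (s+1) (r+1)) := by
  have := Fintype.ofFinite V
  have hfin : ∀ v : V, Finite (V ⧸ Submodule.span F {v}) := fun v => Finite.of_surjective _ (Submodule.mkQ_surjective _)
  let ι : (Rsp k F V s (r+1) × ((v : {v : V // v ≠ 0}) → Rsp k F (V ⧸ Submodule.span F {v.1}) s r)) →ₗ[k]
    ((Submodule F V → k) × ((v : {v : V // v ≠ 0}) → (Submodule F (V ⧸ Submodule.span F {v.1}) → k))) :=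
    LinearMap.prodMap (Submodule.subtype _) (LinearMap.pi fun v => (Submodule.subtype _) ∘ₗ LinearMap.proj v)
  have hι : Function.Injective ι := by
    rintro ⟨a, b⟩ ⟨a', b'⟩ h
    have h1 : a.1 = a'.1 := congrArg Prod.fst h
    have h2 : ∀ v, (b v).1 = (b' v).1 := fun v => congrFun (congrArg Prod.snd h) v
    rw [Subtype.ext h1, funext fun v => Subtype.ext (h2 v)]
  let Ψ := Psi k F V ∘ₗ ι
  have hΨ : Function.Injective Ψ := (Psi_inj k hq).comp hι
  have h0 : ∀ u ∈ Rsp k F V s (r+1), Phi0 k u ∈ Rsp k F (F × V) (s+1) (r+1) := by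
    intro u hu
    have : Rsp k F V s (r+1) ≤ (Rsp k F (F × V) (s+1) (r+1)).comap (Phi0 k) := by
      rw [Rsp, Submodule.span_le]
      rintro _ ⟨X, hX, rfl⟩
      exact Phi0_mem k hX
    exact this hu
  have hv : ∀ v : V, v ≠ 0 → ∀ u ∈ Rsp k F (V ⧸ Submodule.span F {v}) s r, Phi k v u ∈ Rsp k F (F × V) (s+1) (r+1) := by
    intro v hv u hu
    have : Rsp k F (V ⧸ Submodule.span F {v}) s r ≤ (Rsp k F (F × V) (s+1) (r+1)).comap (Phi k v) := by
      rw [Rsp, Submodule.span_le]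
      rintro _ ⟨X, hX, rfl⟩
      exact Phi_mem k hv hX
    exact this hu
  have hR : LinearMap.range Ψ ≤ Rsp k F (F × V) (s+1) (r+1) := by
    rintro _ ⟨u, rfl⟩
    change Psi k F V (ι u) ∈ _
    rw [Psi_apply]
    refine Submodule.add_mem _ (h0 _ u.1.2) (Submodule.sum_mem _ fun v _ => hv v.1 v.2 _ (u.2 v).2)
  have hK : LinearMap.range Ψ ≤ LinearMap.ker (rho k) := by
    rintro _ ⟨u, rfl⟩
    change rho k (Psi k F V (ι u)) = 0
    rw [Psi_apply]
    ext Y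
    simp [rho, LinearMap.funLeft, Phi0, Phi]
  have h1 := fr_add (rho k) _ _ hR hK
  have h2 := Submodule.finrank_mono (rho_map k (F := F) (V := V) (s+1) r)
  rw [LinearMap.finrank_range_of_inj hΨ, finrank_prod, finrank_pi_fintype] at h1
  have h3 : (Fintype.card F ^ finrank F V - 1) * c ≤ ∑ v : {v : V // v ≠ 0}, finrank k (Rsp k F (V ⧸ Submodule.span F {v.1}) s r) := by
    have : Fintype.card {v : V // v ≠ 0} = Fintype.card F ^ finrank F V - 1 := by
      rw [← Module.card_eq_pow_finrank (K := F) (V := V)]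
      simp [Fintype.card_subtype_compl]
    rw [← this, ← smul_eq_mul, ← Finset.card_univ, ← Finset.sum_const]
    exact Finset.sum_le_sum fun v _ => hc v.1 v.2
  omega

theorem Rsp_congr {V₂ : Type*} [AddCommGroup V₂] [Module F V₂] [Finite V₂] (e : V ≃ₗ[F] V₂) (s r : ℕ) :
    finrank k (Rsp k F V₂ s r) ≤ finrank k (Rsp k F V s r) := by
  let E := LinearEquiv.funCongrLeft k k (Submodule.orderIsoMapComap e).toEquiv
  have : Rsp k F V₂ s r ≤ (Rsp k F V s r).map E.symm.toLinearMap := by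
    rw [Rsp, Submodule.span_le]
    rintro _ ⟨X, hX, rfl⟩
    refine ⟨E (inc k r X), ?_, by simp⟩
    have : E (inc k r X) = inc k r (X.comap e.toLinearMap) := by
      ext W
      have h1 : X ≤ W.map e.toLinearMap ↔ X.comap e.toLinearMap ≤ W := by
        exact ((Submodule.orderIsoMapComap e).symm_apply_le).symm
      have h2 : finrank F (W.map e.toLinearMap) = finrank F W := LinearEquiv.finrank_map_eq e W
      change inc k r X (W.map e.toLinearMap) = _
      simp only [inc, h1, h2]
    rw [this]
    apply inc_mem
    have : X.comap e.toLinearMap = X.map e.symm.toLinearMap := (Submodule.map_equiv_eq_comap_symm e.symm X).symm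
    rw [this]
    have h2 : finrank F (X.map e.symm.toLinearMap) = finrank F X := LinearEquiv.finrank_map_eq e.symm X
    rw [h2]; exact hX
  exact (Submodule.finrank_mono this).trans (Submodule.finrank_map_le _ _)
end claim

section claim2
open Module
universe u
variable (k : Type*) [Field k] {F : Type u} [Field F] [Fintype F]

theorem claim (hq : (Fintype.card F : k) ≠ 0) (m : ℕ) : ∀ (V : Type u) [AddCommGroup V] [Module F V] [Finite V]
    (_ : finrank F V = m) (s r : ℕ) (_ : s ≤ r) (_ : s + r ≤ m),
    gaussBinom (Fintype.card F) m s ≤ finrank k (Rsp k F V s r) := by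
  induction m using Nat.strong_induction_on with
  | _ m ih =>
  intro V _ _ _ hV s r hsr hm
  rcases s with _ | s
  · rw [gb_zero]; exact claim_zero k r (by omega)
  rcases hsr.eq_or_lt with rfl | hlt
  · rw [claim_diag, card_gr, hV]
  obtain ⟨r, rfl⟩ : ∃ r', r = r' + 1 := ⟨r - 1, by omega⟩
  obtain ⟨m, rfl⟩ : ∃ m', m = m' + 2 := ⟨m - 2, by omega⟩
  have e : V ≃ₗ[F] (F × (Fin (m+1) → F)) := LinearEquiv.ofFinrankEq _ _ (by simp [hV]; omega)
  refine le_trans ?_ (Rsp_congr k e _ _)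
  refine le_trans ?_ (claim_step k hq s r (gaussBinom (Fintype.card F) m s) ?_)
  · rw [gb_rec _ _ _ Fintype.card_pos]
    have h1 := ih (m+1) (by omega) (Fin (m+1) → F) (by simp) (s+1) r (by omega) (by omega)
    have h2 := ih (m+1) (by omega) (Fin (m+1) → F) (by simp) s (r+1) (by omega) (by omega)
    have h3 : finrank F (Fin (m+1) → F) = m + 1 := by simp
    rw [h3]
    omega
  · intro v hv
    have : Finite ((Fin (m+1) → F) ⧸ Submodule.span F {v}) := Finite.of_surjective _ (Submodule.mkQ_surjective _)
    refine ih m (by omega) _ ?_ s r (by omega) (by omega)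
    rw [Submodule.finrank_quotient, finrank_span_singleton hv]; simp
end claim2


section bas
open Module
universe u

theorem int_sum {A : Type*} [Semiring A] {F : Type*} [Field F] [Fintype F] {V : Type*} [AddCommGroup V] [Module F V]
    [Finite V] (t : ℕ) [Fintype {S : Submodule F V // finrank F S = t}] (U W : Submodule F V) (hU : finrank F U ≤ t) :
    ∑ S : {S : Submodule F V // finrank F S = t}, (if U ≤ S.1 then (1:A) else 0) * (if S.1 ≤ W then (1:A) else 0) =
    if U ≤ W then (gaussBinom (Fintype.card F) (finrank F W - finrank F U) (t - finrank F U) : A) else 0 := by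
  have e : ∀ S : {S : Submodule F V // finrank F S = t}, (if U ≤ S.1 then (1:A) else 0) * (if S.1 ≤ W then (1:A) else 0) =
      if U ≤ S.1 ∧ S.1 ≤ W then 1 else 0 := by
    intro S
    by_cases h1 : U ≤ S.1 <;> by_cases h2 : S.1 ≤ W <;> simp [h1, h2]
  simp_rw [e]
  split_ifs with h
  · rw [Finset.sum_boole, ← card_interval h t hU]
    congr 1
    rw [← Fintype.card_subtype, ← Nat.card_eq_fintype_card]
    exact Nat.card_congr (Equiv.subtypeSubtypeEquivSubtypeInter (fun S : Submodule F V => finrank F S = t) (fun S => U ≤ S ∧ S ≤ W))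
  · apply Finset.sum_eq_zero
    intro S _
    rw [if_neg]
    exact fun hh => h (hh.1.trans hh.2)

variable (k : Type*) [Field k] {F : Type u} [Field F] [Fintype F] {V : Type u} [AddCommGroup V] [Module F V] [Finite V]

noncomputable def Dmap (t r : ℕ) [Fintype {S : Submodule F V // finrank F S = t}] : (Submodule F V → k) →ₗ[k] (Submodule F V → k) where
  toFun g W := if finrank F W = r then ∑ S : {S : Submodule F V // finrank F S = t}, g S.1 * (if S.1 ≤ W then (1:k) else 0) else 0
  map_add' u v := by
    ext W; simp only [Pi.add_apply]; split_ifs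
    · simp only [add_mul, Finset.sum_add_distrib]
    · simp
  map_smul' c v := by
    ext W; simp only [Pi.smul_apply]; split_ifs
    · simp [Finset.mul_sum]
    · simp

theorem Dmap_inc (t r : ℕ) [Fintype {S : Submodule F V // finrank F S = t}] (U : Submodule F V) (hU : finrank F U ≤ t) :
    Dmap k t r (inc k t U) = (gaussBinom (Fintype.card F) (r - finrank F U) (t - finrank F U) : k) • inc k r U := by
  ext W
  simp only [Dmap, LinearMap.coe_mk, AddHom.coe_mk, Pi.smul_apply]
  by_cases hW : finrank F W = r
  · have := int_sum (A := k) t U W hU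
    rw [hW] at this
    simp only [inc, hW, and_true, if_true]
    rw [smul_eq_mul, mul_ite, mul_one, mul_zero, ← this]
    refine Finset.sum_congr rfl fun S _ => ?_
    simp [S.2]
  · simp [inc, hW]

theorem li_of (hq : (Fintype.card F : k) ≠ 0) {m : ℕ} (hV : finrank F V = m) {s r : ℕ} (h1 : s ≤ r) (h2 : s + r ≤ m)
    (B : Finset (Submodule F V)) (hB : B.card = gaussBinom (Fintype.card F) m s)
    (hs : Rsp k F V s r ≤ Submodule.span k (inc k r '' (B : Set (Submodule F V)))) :
    LinearIndepOn k (inc k r) (B : Set (Submodule F V)) := by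
  have : LinearIndependent k (fun x : (B : Set (Submodule F V)) => inc k r x.1) := by
    rw [linearIndependent_iff_card_le_finrank_span]
    have e : Set.range (fun x : (B : Set (Submodule F V)) => inc k r x.1) = inc k r '' (B : Set (Submodule F V)) := by
      rw [Set.image_eq_range]
    rw [Set.finrank, e]
    refine le_trans ?_ ((claim k hq m V hV s r h1 h2).trans (Submodule.finrank_mono hs))
    rw [← hB]; simp
  exact this

def multi (q m i : ℕ) : ℕ := if i = 0 then 1 else gaussBinom q m i - gaussBinom q m (i - 1)

theorem basisB (hq : (Fintype.card F : k) ≠ 0) {m : ℕ} (hV : finrank F V = m) (s : ℕ) (h : 2 * s ≤ m) :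
    ∃ B : Finset (Submodule F V), (∀ X ∈ B, finrank F X ≤ s) ∧
      B.val.map (fun X : Submodule F V => finrank F X) = (Finset.range (s+1)).val.bind
        (fun i => Multiset.replicate (multi (Fintype.card F) m i) i) ∧
      B.card = gaussBinom (Fintype.card F) m s ∧
      ∀ r, s ≤ r → s + r ≤ m → Rsp k F V s r ≤ Submodule.span k (inc k r '' (B : Set (Submodule F V))) := by
  induction s with
  | zero =>
    refine ⟨{⊥}, by simp, by simp [multi], by simp [gb_zero], ?_⟩
    intro r _ _
    rw [Rsp]
    apply Submodule.span_mono
    rintro _ ⟨X, hX, rfl⟩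
    refine ⟨X, ?_, rfl⟩
    have : finrank F X = 0 := by simpa using hX
    simpa [Submodule.finrank_eq_zero] using this
  | succ s ih =>
    obtain ⟨B, hB1, hB2, hB3, hB4⟩ := ih (by omega)
    have hLI := li_of k hq hV (s := s) (r := s+1) (by omega) (by omega) B hB3 (hB4 _ (by omega) (by omega))
    obtain ⟨b, hbt, hsb, hspan, hb⟩ := exists_linearIndepOn_extension hLI
      (t := (B : Set (Submodule F V)) ∪ {X | finrank F X = s + 1}) Set.subset_union_left
    have hfin : b.Finite := Set.toFinite b
    set B' := hfin.toFinset with hB'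
    have hB'c : (B' : Set (Submodule F V)) = b := hfin.coe_toFinset
    rw [← hB'c] at hbt hsb hspan hb
    have hsub : B ⊆ B' := by exact_mod_cast hsb
    have hnew : ∀ X ∈ B' \ B, finrank F X = s + 1 := by
      intro X hX
      rw [Finset.mem_sdiff] at hX
      rcases hbt (Finset.mem_coe.2 hX.1) with h1 | h1
      · exact absurd h1 hX.2
      · exact h1
    have hle : ∀ X ∈ B', finrank F X ≤ s + 1 := by
      intro X hX
      by_cases hXB : X ∈ B
      · exact (hB1 X hXB).trans (by omega)
      · exact (hnew X (by simp [hX, hXB])).le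
    have hfull : Rsp k F V (s+1) (s+1) ≤ Submodule.span k (inc k (s+1) '' (B' : Set (Submodule F V))) := by
      rw [Rsp, Submodule.span_le]
      rintro _ ⟨X, hX, rfl⟩
      by_cases hX2 : finrank F X = s + 1
      · exact hspan ⟨X, Or.inr hX2, rfl⟩
      · have hX : finrank F X ≤ s + 1 := hX
        have h1 := hB4 (s+1) (by omega) (by omega) (inc_mem k (X := X) (by omega))
        exact Submodule.span_mono (Set.image_mono hsb) h1
    have hcard : B'.card = gaussBinom (Fintype.card F) m (s+1) := by
      have h1 : Submodule.span k (inc k (s+1) '' (B' : Set (Submodule F V))) = Rsp k F V (s+1) (s+1) := by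
        apply le_antisymm _ hfull
        rw [Submodule.span_le]
        rintro _ ⟨X, hX, rfl⟩
        exact inc_mem k (hle X hX)
      have h2 := finrank_span_eq_card (R := k) (b := fun x : (B' : Set (Submodule F V)) => inc k (s+1) x.1) hb
      rw [← Set.image_eq_range, h1, claim_diag, card_gr, hV] at h2
      rw [h2]; simp
    refine ⟨B', hle, ?_, hcard, ?_⟩
    · have e1 : B'.val = B.val + (B' \ B).val := by
        rw [← Finset.disjUnion_val _ _ Finset.disjoint_sdiff, Finset.disjUnion_eq_union, Finset.union_sdiff_of_subset hsub]
      have e2 : (B' \ B).val.map (fun X : Submodule F V => finrank F X) = Multiset.replicate (multi (Fintype.card F) m (s+1)) (s+1) := by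
        rw [Multiset.eq_replicate]
        constructor
        · rw [Multiset.card_map, Finset.card_val, Finset.card_sdiff_of_subset hsub, hcard, hB3]
          simp [multi]
        · intro x hx
          obtain ⟨X, hX, rfl⟩ := Multiset.mem_map.1 hx
          exact hnew X hX
      rw [e1, Multiset.map_add, hB2, e2, Finset.range_val, Finset.range_val, Multiset.range_succ (s+1), Multiset.cons_bind, add_comm]
    · intro r hr1 hr2
      have := Fintype.ofFinite {S : Submodule F V // finrank F S = s + 1}
      rw [Rsp, Submodule.span_le]
      rintro _ ⟨X, hX, rfl⟩
      have hX : finrank F X ≤ s + 1 := hX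
      by_cases hX2 : finrank F X = s + 1
      · have h1 : inc k (s+1) X ∈ Submodule.span k (inc k (s+1) '' (B' : Set (Submodule F V))) := hfull (inc_mem k hX)
        have h2 := Submodule.mem_map_of_mem (f := Dmap k (s+1) r) h1
        rw [Dmap_inc k _ _ _ hX, hX2, Nat.sub_self, gb_zero, Nat.cast_one, one_smul, Submodule.map_span] at h2
        refine (Submodule.span_le.2 ?_) h2
        rintro _ ⟨_, ⟨U, hU, rfl⟩, rfl⟩
        rw [Dmap_inc k _ _ _ (hle U hU)]
        exact Submodule.smul_mem _ _ (Submodule.subset_span ⟨U, hU, rfl⟩)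
      · have h1 := hB4 r (by omega) (by omega) (inc_mem k (X := X) (by omega))
        exact Submodule.span_mono (Set.image_mono hsb) h1
end bas

section fin
open Module IsLocalRing

theorem det_unit {O : Type*} [CommRing O] [IsLocalRing O] {α : Type*} [Fintype α] [DecidableEq α]
    (M : Matrix α α O) (h : LinearIndependent (ResidueField O) (fun a b => residue O (M a b))) : IsUnit M.det := by
  have h2 : LinearIndependent (ResidueField O) ((residue O).mapMatrix M).row := h
  rw [Matrix.linearIndependent_rows_iff_isUnit, Matrix.isUnit_iff_isUnit_det, ← RingHom.map_det] at h2
  exact isUnit_of_map_unit (residue O) _ h2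

theorem unit_complete {O : Type*} [CommRing O] [IsLocalRing O] {α β : Type*} [Fintype α]
    [Fintype β] [DecidableEq β]
    (M : Matrix α β O) (h : LinearIndependent (ResidueField O) (fun a b => residue O (M a b))) :
    ∃ (σ : α ↪ β) (Q : Matrix β β O), IsUnit Q.det ∧ ∀ a, Q (σ a) = M a := by
  set bs := Basis.sumExtend h with hbs
  have : Fintype (α ⊕ Basis.sumExtendIndex h) := FiniteDimensional.fintypeBasisIndex bs
  have hc : Fintype.card β = Fintype.card (α ⊕ Basis.sumExtendIndex h) := by
    rw [← finrank_eq_card_basis bs, finrank_fintype_fun_eq_card]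
  let e := Fintype.equivOfCardEq hc
  choose lift hlift using residue_surjective (R := O)
  let Q : Matrix β β O := fun j => Sum.elim (fun a => M a) (fun i b => lift (bs (Sum.inr i) b)) (e j)
  refine ⟨⟨fun a => e.symm (Sum.inl a), fun a b hab => by simpa using hab⟩, Q, ?_, ?_⟩
  · apply det_unit
    have : (fun a b => residue O (Q a b)) = bs ∘ e := by
      funext j b
      simp only [Q, Function.comp]
      rcases e j with a | i
      · simp only [Sum.elim_inl]
        have hx : bs (Sum.inl a) = fun b => residue O (M a b) := by
          simp only [hbs, Basis.sumExtend, Basis.reindex_apply, Basis.extend_apply_self]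
          rfl
        rw [hx]
      · simp [hlift]
    rw [this]
    exact bs.linearIndependent.comp _ e.injective
  · intro a
    change Sum.elim (fun a => M a) (fun i b => lift (bs (Sum.inr i) b)) (e (e.symm (Sum.inl a))) = M a
    rw [Equiv.apply_symm_apply, Sum.elim_inl]

theorem li_restrict (k : Type*) [Field k] {F : Type*} [Field F] [Fintype F] {V : Type*} [AddCommGroup V] [Module F V]
    [Finite V] (r : ℕ) (B : Set (Submodule F V)) (h : LinearIndepOn k (inc k r) B) :
    LinearIndependent k (fun (X : B) (W : {W : Submodule F V // finrank F W = r}) => if X.1 ≤ W.1 then (1:k) else 0) := by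
  apply LinearIndependent.of_comp (Function.ExtendByZero.linearMap k (Subtype.val : {W : Submodule F V // finrank F W = r} → Submodule F V))
  have h' : LinearIndependent k (fun x : B => inc k r x.1) := h
  convert h' using 1
  funext X W
  simp only [Function.comp, Function.ExtendByZero.linearMap_apply]
  by_cases hW : finrank F W = r
  · have := Subtype.val_injective.extend_apply (fun (W : {W : Submodule F V // finrank F W = r}) => if X.1 ≤ W.1 then (1:k) else 0) 0 ⟨W, hW⟩
    simp only at this
    rw [this]
    simp [inc, hW]
  · rw [Function.extend_apply' _ _ _ (by rintro ⟨a, rfl⟩; exact hW a.2)]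
    simp [inc, hW]

theorem card_ne (ℓ : ℕ) [Fact ℓ.Prime] (q : ℕ) (h : ¬ ℓ ∣ q) : (q : ResidueField ℤ_[ℓ]) ≠ 0 := by
  rw [← map_natCast (residue ℤ_[ℓ]), Ne, residue_eq_zero_iff, mem_maximalIdeal, mem_nonunits_iff, not_not,
    PadicInt.isUnit_iff]
  by_contra hc
  apply h
  have h1 := lt_of_le_of_ne (PadicInt.norm_le_one (q : ℤ_[ℓ])) hc
  have := (PadicInt.norm_int_lt_one_iff_dvd (p := ℓ) (q : ℤ)).1 (by simpa using h1)
  exact_mod_cast this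
end fin

/-- James/Chandler: let `V = F^{n+1}` for a finite field `F`
with `q` elements, `s ≤ r`, `s + r ≤ n + 1`, and let `A_{s,r}` be the inclusion
matrix of `s`-dimensional subspaces in `r`-dimensional subspaces.  For any
prime `ℓ` not dividing `q`, over the `ℓ`-adic integers `ℤ_ℓ` the matrix
`A_{s,r}` has a diagonal form with diagonal entries the Gaussian binomial
coefficients `[r-i choose s-i]_q`, each with multiplicity
`[n+1 choose i]_q - [n+1 choose i-1]_q`, for `0 ≤ i ≤ s`. -/
theorem subspace_inclusion_diagonal_form_ladic
    (F : Type*) [Field F] [Fintype F] (n s r : ℕ)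
    (hsr : s ≤ r) (hrn : s + r ≤ n + 1)
    (ℓ : ℕ) [Fact ℓ.Prime] (hℓ : ¬ ℓ ∣ Fintype.card F)
    [Fintype {U : Submodule F (Fin (n + 1) → F) // Module.finrank F U = s}]
    [Fintype {U : Submodule F (Fin (n + 1) → F) // Module.finrank F U = r}] :
    ∃ (P : Matrix {U : Submodule F (Fin (n + 1) → F) // Module.finrank F U = s}
          {U : Submodule F (Fin (n + 1) → F) // Module.finrank F U = s} ℤ_[ℓ])
      (Q : Matrix {U : Submodule F (Fin (n + 1) → F) // Module.finrank F U = r}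
          {U : Submodule F (Fin (n + 1) → F) // Module.finrank F U = r} ℤ_[ℓ])
      (σ : {U : Submodule F (Fin (n + 1) → F) // Module.finrank F U = s} ↪
          {U : Submodule F (Fin (n + 1) → F) // Module.finrank F U = r})
      (d : {U : Submodule F (Fin (n + 1) → F) // Module.finrank F U = s} → ℤ_[ℓ]),
      IsUnit P.det ∧ IsUnit Q.det ∧
      P * (Matrix.of fun (U : {U : Submodule F (Fin (n + 1) → F) // Module.finrank F U = s})
            (W : {U : Submodule F (Fin (n + 1) → F) // Module.finrank F U = r}) =>
          if (U : Submodule F (Fin (n + 1) → F)) ≤ (W : Submodule F (Fin (n + 1) → F))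
          then (1 : ℤ_[ℓ]) else 0) * Q =
        Matrix.of (fun U W => if W = σ U then d U else 0) ∧
      Finset.univ.val.map d =
        (Finset.range (s + 1)).val.bind fun i =>
          Multiset.replicate
            (if i = 0 then 1 else
              gaussBinom (Fintype.card F) (n + 1) i -
                gaussBinom (Fintype.card F) (n + 1) (i - 1))
            ((gaussBinom (Fintype.card F) (r - i) (s - i) : ℤ_[ℓ])) := by
  have hq := card_ne ℓ _ hℓ
  have hV : Module.finrank F (Fin (n + 1) → F) = n + 1 := by simp
  obtain ⟨B, hB1, hB2, hB3, hB4⟩ := basisB (IsLocalRing.ResidueField ℤ_[ℓ]) hq hV s (by omega)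
  have hcard : Fintype.card {U : Submodule F (Fin (n + 1) → F) // Module.finrank F U = s} = Fintype.card B := by
    rw [← Nat.card_eq_fintype_card, card_gr, hV, Fintype.card_coe, hB3]
  let β := Fintype.equivOfCardEq hcard
  have hLI : ∀ t, s ≤ t → s + t ≤ n + 1 → LinearIndependent (IsLocalRing.ResidueField ℤ_[ℓ])
      (fun (U : {U : Submodule F (Fin (n + 1) → F) // Module.finrank F U = s})
        (W : {U : Submodule F (Fin (n + 1) → F) // Module.finrank F U = t}) =>
        IsLocalRing.residue ℤ_[ℓ] (if (β U).1 ≤ W.1 then 1 else 0)) := by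
    intro t h1 h2
    have h3 := li_restrict _ t _ (li_of _ hq hV h1 h2 B hB3 (hB4 t h1 h2))
    have h4 := h3.comp β β.injective
    convert h4 using 1
    funext U W
    simp only [Function.comp]
    split_ifs <;> simp
  let P : Matrix {U : Submodule F (Fin (n + 1) → F) // Module.finrank F U = s}
          {U : Submodule F (Fin (n + 1) → F) // Module.finrank F U = s} ℤ_[ℓ] :=
    fun U S => if (β U).1 ≤ S.1 then 1 else 0
  have hP : IsUnit P.det := det_unit P (hLI s le_rfl (by omega))
  obtain ⟨σ, Q, hQ, hσ⟩ := unit_complete (O := ℤ_[ℓ])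
    (fun (U : {U : Submodule F (Fin (n + 1) → F) // Module.finrank F U = s})
        (W : {U : Submodule F (Fin (n + 1) → F) // Module.finrank F U = r}) =>
        (if (β U).1 ≤ W.1 then 1 else 0)) (hLI r hsr hrn)
  let g : ℕ → ℤ_[ℓ] := fun i => (gaussBinom (Fintype.card F) (r - i) (s - i) : ℤ_[ℓ])
  refine ⟨P, Q⁻¹, σ, fun U => g (Module.finrank F (β U).1), hP, ?_, ?_, ?_⟩
  · exact Matrix.isUnit_nonsing_inv_det Q hQ
  · have key : P * (Matrix.of fun (U : {U : Submodule F (Fin (n + 1) → F) // Module.finrank F U = s})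
            (W : {U : Submodule F (Fin (n + 1) → F) // Module.finrank F U = r}) =>
          if (U : Submodule F (Fin (n + 1) → F)) ≤ (W : Submodule F (Fin (n + 1) → F))
          then (1 : ℤ_[ℓ]) else 0) = Matrix.of (fun U W => if W = σ U then g (Module.finrank F (β U).1) else 0) * Q := by
      ext1 U W
      rw [Matrix.mul_apply, Matrix.mul_apply]
      have h1 := int_sum (A := ℤ_[ℓ]) s (β U).1 W.1 (hB1 _ (β U).2)
      rw [W.2] at h1
      refine Eq.trans h1 ?_
      simp only [Matrix.of_apply, ite_mul, zero_mul, Finset.sum_ite_eq', Finset.mem_univ, if_true, hσ]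
      simp [g]
    rw [key, Matrix.mul_nonsing_inv_cancel_right _ _ hQ]
  · have h1 : (Finset.univ : Finset {U : Submodule F (Fin (n + 1) → F) // Module.finrank F U = s}).val.map
        (fun U => (β U).1) = B.val := by
      have e1 : (Finset.univ : Finset {U : Submodule F (Fin (n + 1) → F) // Module.finrank F U = s}).map β.toEmbedding = Finset.univ := by simp
      have e2 := congrArg (fun x : Finset B => x.val.map Subtype.val) e1
      simp only [Finset.map_val, Multiset.map_map] at e2
      refine Eq.trans e2 ?_
      exact Multiset.attach_map_val B.val
    have h2 := congrArg (Multiset.map g) hB2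
    rw [← h1, Multiset.map_map, Multiset.map_map, Multiset.map_bind] at h2
    refine Eq.trans h2 ?_
    simp only [Multiset.map_replicate, multi, g]
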